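/- Let L = sl₂(F_q) with q odd. In the comaximal graph Γ(L), every Borel subalgebra has degree q² + q, every nilpotent line has degree q² + q, every split semisimple line has degree q² − 1, and every nonsplit semisimple line has degree (q+1)². Consequently Γ(L) has order (q+1)² + 1 and size q(q+1)³/2. -/

import Mathlib

open Module

/-- The degree of a vertex `A` in the comaximal graph of `L`: the number of
nontrivial proper subalgebras `B ≠ A` with `⟨A,B⟩ = L`. -/
noncomputable def comaximalDegree (F : Type*) [Field F] (L : Type*) [LieRing L]
    [LieAlgebra F L] (A : LieSubalgebra F L) : ℕ :=
  Nat.card {B : LieSubalgebra F L // (B ≠ ⊥ ∧ B ≠ ⊤) ∧ B ≠ A ∧ A ⊔ B = ⊤}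

open scoped LinearAlgebra.Projectivization

namespace LieSubalgebra

variable {F L : Type*} [Field F] [LieRing L] [LieAlgebra F L]

/-- Every one-dimensional subspace of a Lie algebra is a Lie subalgebra. -/
def ofFinrankEqOne (H : Submodule F L) (hH : finrank F H = 1) : LieSubalgebra F L :=
  { H with
    lie_mem' := by
      obtain ⟨v, -, hv⟩ := finrank_eq_one_iff'.1 hH
      intro u w hu hw
      obtain ⟨r, hr⟩ := hv ⟨u, hu⟩
      obtain ⟨s, hs⟩ := hv ⟨w, hw⟩
      have hu' : u = r • (v : L) := congrArg Subtype.val hr.symm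
      have hw' : w = s • (v : L) := congrArg Subtype.val hs.symm
      have h0 : ⁅u, w⁆ = 0 := by simp [hu', hw']
      rw [h0]
      exact H.zero_mem }

theorem natCard_lines_le (W : Submodule F L) :
    Nat.card {A : LieSubalgebra F L // finrank F A = 1 ∧ A.toSubmodule ≤ W} =
      Nat.card (ℙ F W) := by
  rw [Nat.card_congr (Projectivization.equivSubmodule F W)]
  have hfr (H : Submodule F W) : finrank F (H.map W.subtype) = finrank F H :=
    (Submodule.equivMapOfInjective W.subtype W.subtype_injective H).finrank_eq.symm
  symm
  refine Nat.card_eq_of_bijective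
    (fun H ↦ ⟨ofFinrankEqOne (H.1.map W.subtype) ((hfr H.1).trans H.2),
      (hfr H.1).trans H.2, W.map_subtype_le H.1⟩) ⟨?_, ?_⟩
  · intro H H' h
    have h' : H.1.map W.subtype = H'.1.map W.subtype :=
      congrArg (fun A ↦ A.1.toSubmodule) h
    exact Subtype.ext (Submodule.map_injective_of_injective W.subtype_injective h')
  · rintro ⟨A, hA, hAW⟩
    have hmap : (A.toSubmodule.comap W.subtype).map W.subtype = A.toSubmodule := by
      rw [Submodule.map_comap_subtype, inf_eq_right.2 hAW]
    refine ⟨⟨A.toSubmodule.comap W.subtype, ?_⟩, ?_⟩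
    · rw [← hfr, hmap]
      exact hA
    · apply Subtype.ext
      apply toSubmodule_injective
      exact hmap

theorem finrank_mono' [FiniteDimensional F L] {A B : LieSubalgebra F L} (h : A ≤ B) :
    finrank F A ≤ finrank F B :=
  Submodule.finrank_mono (s := A.toSubmodule) (t := B.toSubmodule) h

theorem eq_of_le_of_finrank_le' [FiniteDimensional F L] {A B : LieSubalgebra F L} (h : A ≤ B)
    (hr : finrank F B ≤ finrank F A) : A = B :=
  toSubmodule_injective
    (Submodule.eq_of_le_of_finrank_le (S₁ := A.toSubmodule) (S₂ := B.toSubmodule) h hr)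

theorem eq_top_iff_finrank [FiniteDimensional F L] {A : LieSubalgebra F L} :
    A = ⊤ ↔ finrank F A = finrank F L := by
  constructor
  · rintro rfl
    exact finrank_top F L
  · intro h
    apply toSubmodule_injective
    exact Submodule.eq_top_of_finrank_eq h

theorem eq_bot_iff_finrank [FiniteDimensional F L] {A : LieSubalgebra F L} :
    A = ⊥ ↔ finrank F A = 0 := by
  rw [← toSubmodule_inj]
  exact Submodule.finrank_eq_zero.symm

theorem ne_bot_ne_top_iff [FiniteDimensional F L] (hL : finrank F L = 3) {A : LieSubalgebra F L} :
    A ≠ ⊥ ∧ A ≠ ⊤ ↔ finrank F A = 1 ∨ finrank F A = 2 := by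
  have h := Submodule.finrank_le A.toSubmodule
  change finrank F A ≤ _ at h
  rw [ne_eq, ne_eq, eq_bot_iff_finrank, eq_top_iff_finrank, hL]
  omega

/-- Two distinct nontrivial proper subalgebras generate a three-dimensional Lie algebra iff no
two-dimensional subalgebra contains both. -/
theorem sup_eq_top_iff [FiniteDimensional F L] (hL : finrank F L = 3) {A B : LieSubalgebra F L}
    (hA : A ≠ ⊥ ∧ A ≠ ⊤) (hB : B ≠ ⊥ ∧ B ≠ ⊤) (hne : B ≠ A) :
    A ⊔ B = ⊤ ↔ ∀ W : LieSubalgebra F L, finrank F W = 2 → A ≤ W → ¬ B ≤ W := by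
  constructor
  · intro h W hW hAW hBW
    have := eq_top_iff_finrank.1 (top_le_iff.1 (h ▸ sup_le hAW hBW))
    omega
  · intro h
    by_contra hsup
    rw [ne_bot_ne_top_iff hL] at hA hB
    have hAle := finrank_mono' (le_sup_left : A ≤ A ⊔ B)
    have hBle := finrank_mono' (le_sup_right : B ≤ A ⊔ B)
    have hbot : A ⊔ B ≠ ⊥ := by
      rw [ne_eq, eq_bot_iff_finrank]
      omega
    rcases (ne_bot_ne_top_iff hL).1 ⟨hbot, hsup⟩ with h1 | h2
    · exact hne ((eq_of_le_of_finrank_le' le_sup_right (by omega)).trans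
        (eq_of_le_of_finrank_le' le_sup_left (by omega)).symm)
    · exact h _ h2 le_sup_left le_sup_right

section Counting

open Finset

variable [Finite F]

theorem natCard_lines (hL : finrank F L = 3) :
    Nat.card {A : LieSubalgebra F L // finrank F A = 1} = Nat.card F ^ 2 + Nat.card F + 1 := by
  have h := natCard_lines_le (⊤ : Submodule F L)
  rw [Projectivization.card_of_finrank F (⊤ : Submodule F L) ((finrank_top F L).trans hL)] at h
  simp only [le_top, and_true] at h
  rw [h]
  simp only [Finset.sum_range_succ, Finset.sum_range_zero]
  ring

variable [Fintype (LieSubalgebra F L)]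

open Classical in
theorem card_filter_line_le {W : LieSubalgebra F L} (hW : finrank F W = 2) :
    #{A : LieSubalgebra F L | finrank F A = 1 ∧ A ≤ W} = Nat.card F + 1 := by
  rw [← Fintype.card_subtype, ← Nat.card_eq_fintype_card]
  exact (natCard_lines_le W.toSubmodule).trans (Projectivization.card_of_finrank_two F _ hW)

open Classical in
theorem card_filter_vertex_le [FiniteDimensional F L] (hL : finrank F L = 3) {W : LieSubalgebra F L}
    (hW : finrank F W = 2) :
    #{B : LieSubalgebra F L | (B ≠ ⊥ ∧ B ≠ ⊤) ∧ B ≤ W} = Nat.card F + 2 := by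
  have h : ({B : LieSubalgebra F L | (B ≠ ⊥ ∧ B ≠ ⊤) ∧ B ≤ W} : Finset (LieSubalgebra F L)) =
      insert W ({A | finrank F A = 1 ∧ A ≤ W} : Finset (LieSubalgebra F L)) := by
    ext B
    simp only [mem_filter, mem_univ, true_and, mem_insert, ne_bot_ne_top_iff hL]
    constructor
    · rintro ⟨h1 | h2, hle⟩
      · exact Or.inr ⟨h1, hle⟩
      · exact Or.inl (eq_of_le_of_finrank_le' hle (by omega))
    · rintro (rfl | ⟨h1, hle⟩)
      · exact ⟨Or.inr hW, le_rfl⟩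
      · exact ⟨Or.inl h1, hle⟩
  rw [h, card_insert_of_notMem (by simp [hW]), card_filter_line_le hW]

open Classical in
theorem card_filter_vertex [FiniteDimensional F L] (hL : finrank F L = 3)
    (hb : #{W : LieSubalgebra F L | finrank F W = 2} = Nat.card F + 1) :
    #{B : LieSubalgebra F L | B ≠ ⊥ ∧ B ≠ ⊤} = (Nat.card F + 1) ^ 2 + 1 := by
  have hl := natCard_lines (F := F) (L := L) hL
  rw [Nat.card_eq_fintype_card, Fintype.card_subtype] at hl
  simp only [ne_bot_ne_top_iff hL]
  rw [filter_or, card_union_of_disjoint, hl, hb]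
  · ring
  · rw [disjoint_filter]
    intro B _ h1 h2
    omega

open Classical in
theorem comaximalDegree_of_finrank_eq_two [FiniteDimensional F L] (hL : finrank F L = 3)
    (hb : #{W : LieSubalgebra F L | finrank F W = 2} = Nat.card F + 1)
    {A : LieSubalgebra F L} (hA : finrank F A = 2) :
    comaximalDegree F L A = Nat.card F ^ 2 + Nat.card F := by
  have hV := card_filter_vertex hL hb
  rw [← card_filter_add_card_filter_not (fun B ↦ B ≤ A), filter_filter, filter_filter,
    card_filter_vertex_le hL hA] at hV
  have hdeg : comaximalDegree F L A =
      #{B : LieSubalgebra F L | (B ≠ ⊥ ∧ B ≠ ⊤) ∧ ¬ B ≤ A} := by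
    rw [comaximalDegree, Nat.card_eq_fintype_card, Fintype.card_subtype]
    congr 1
    ext B
    simp only [mem_filter, mem_univ, true_and]
    refine and_congr_right fun hB ↦ ?_
    constructor
    · rintro ⟨hne, hsup⟩
      exact (sup_eq_top_iff hL ((ne_bot_ne_top_iff hL).2 (Or.inr hA)) hB hne).1 hsup A hA le_rfl
    · intro hle
      have hne : B ≠ A := by
        rintro rfl
        exact hle le_rfl
      refine ⟨hne, (sup_eq_top_iff hL ((ne_bot_ne_top_iff hL).2 (Or.inr hA)) hB hne).2 ?_⟩
      intro W hW hAW
      rwa [← eq_of_le_of_finrank_le' hAW (by omega)]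
  rw [hdeg]
  linarith

open Classical in
theorem comaximalDegree_add_of_finrank_eq_one [FiniteDimensional F L] (hL : finrank F L = 3)
    (hb : #{W : LieSubalgebra F L | finrank F W = 2} = Nat.card F + 1)
    {A : LieSubalgebra F L} (hA : finrank F A = 1) :
    comaximalDegree F L A +
      #{W : LieSubalgebra F L | finrank F W = 2 ∧ A ≤ W} * (Nat.card F + 1) =
      (Nat.card F + 1) ^ 2 := by
  have hAv : A ≠ ⊥ ∧ A ≠ ⊤ := (ne_bot_ne_top_iff hL).2 (Or.inl hA)
  have hV := card_filter_vertex hL hb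
  rw [← card_filter_add_card_filter_not (fun B ↦ B ≠ A ∧ A ⊔ B = ⊤), filter_filter,
    filter_filter] at hV
  have hdeg : comaximalDegree F L A =
      #{B : LieSubalgebra F L | (B ≠ ⊥ ∧ B ≠ ⊤) ∧ B ≠ A ∧ A ⊔ B = ⊤} := by
    rw [comaximalDegree, Nat.card_eq_fintype_card, Fintype.card_subtype]
  have hnon : ({B | (B ≠ ⊥ ∧ B ≠ ⊤) ∧ ¬ (B ≠ A ∧ A ⊔ B = ⊤)} :
        Finset (LieSubalgebra F L)) =
      insert A (({W | finrank F W = 2 ∧ A ≤ W} : Finset (LieSubalgebra F L)).biUnion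
        fun W ↦ ({B | (B ≠ ⊥ ∧ B ≠ ⊤) ∧ B ≤ W} : Finset (LieSubalgebra F L)).erase A) := by
    ext B
    simp only [mem_filter, mem_univ, true_and, mem_insert, mem_biUnion, mem_erase]
    by_cases hBA : B = A
    · simp [hBA, hAv]
    · simp only [hBA, false_or, not_false_eq_true, true_and, ne_eq]
      constructor
      · rintro ⟨hB, hsup⟩
        rw [sup_eq_top_iff hL hAv hB hBA] at hsup
        push Not at hsup
        obtain ⟨W, hW, hAW, hBW⟩ := hsup
        exact ⟨W, ⟨hW, hAW⟩, hB, hBW⟩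
      · rintro ⟨W, ⟨hW, hAW⟩, hB, hBW⟩
        exact ⟨hB, fun hsup ↦ (sup_eq_top_iff hL hAv hB hBA).1 hsup W hW hAW hBW⟩
  have hcard : #{B : LieSubalgebra F L | (B ≠ ⊥ ∧ B ≠ ⊤) ∧ ¬ (B ≠ A ∧ A ⊔ B = ⊤)} =
      #{W : LieSubalgebra F L | finrank F W = 2 ∧ A ≤ W} * (Nat.card F + 1) + 1 := by
    rw [hnon, card_insert_of_notMem (by simp), card_biUnion]
    · rw [sum_const_nat]
      intro W hW
      simp only [mem_filter, mem_univ, true_and] at hW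
      rw [card_erase_of_mem (by simp [hAv, hW.2]), card_filter_vertex_le hL hW.1]
      rfl
    · intro W hW W' hW' hne
      simp only [coe_filter, Set.mem_ofPred_eq, mem_univ, true_and] at hW hW'
      refine Finset.disjoint_left.2 fun B hB hB' ↦ ?_
      simp only [mem_erase, mem_filter, mem_univ, true_and] at hB hB'
      obtain ⟨hBA, hBv, hBW⟩ := hB
      have hsup : A ⊔ B ≠ ⊤ := fun h ↦
        (sup_eq_top_iff hL hAv hBv hBA).1 h W hW.1 hW.2 hBW
      have hle : A ⊔ B ≤ W := sup_le hW.2 hBW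
      have hle' : A ⊔ B ≤ W' := sup_le hW'.2 hB'.2.2
      have hlt : 2 ≤ finrank F (A ⊔ B : LieSubalgebra F L) := by
        by_contra hcon
        rcases (ne_bot_ne_top_iff hL).1 hBv with h1 | h2
        · exact hBA ((eq_of_le_of_finrank_le' le_sup_right (by omega)).trans
            (eq_of_le_of_finrank_le' le_sup_left (by omega)).symm)
        · have := finrank_mono' (le_sup_right : B ≤ A ⊔ B)
          omega
      exact hne ((eq_of_le_of_finrank_le' hle (by omega)).symm.trans
        (eq_of_le_of_finrank_le' hle' (by omega)))
  rw [hcard] at hV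
  rw [hdeg]
  linarith

open Classical in
theorem sum_card_filter_line (hb : #{W : LieSubalgebra F L | finrank F W = 2} = Nat.card F + 1) :
    ∑ A ∈ ({A | finrank F A = 1} : Finset (LieSubalgebra F L)),
      #{W : LieSubalgebra F L | finrank F W = 2 ∧ A ≤ W} = (Nat.card F + 1) ^ 2 := by
  have h := sum_card_bipartiteAbove_eq_sum_card_bipartiteBelow
    (s := ({A | finrank F A = 1} : Finset (LieSubalgebra F L)))
    (t := ({W | finrank F W = 2} : Finset (LieSubalgebra F L))) (fun A W ↦ A ≤ W)
  simp only [bipartiteAbove, bipartiteBelow, filter_filter] at h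
  rw [h, sum_const_nat (m := Nat.card F + 1), hb, sq]
  intro W hW
  simp only [mem_filter, mem_univ, true_and] at hW
  exact card_filter_line_le hW

open Classical in
theorem natCard_comaximal_pairs [FiniteDimensional F L] (hL : finrank F L = 3)
    (hb : #{W : LieSubalgebra F L | finrank F W = 2} = Nat.card F + 1) :
    Nat.card {p : LieSubalgebra F L × LieSubalgebra F L //
      (p.1 ≠ ⊥ ∧ p.1 ≠ ⊤) ∧ (p.2 ≠ ⊥ ∧ p.2 ≠ ⊤) ∧ p.1 ≠ p.2 ∧ p.1 ⊔ p.2 = ⊤} =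
      Nat.card F * (Nat.card F + 1) ^ 3 := by
  have hpairs : Nat.card {p : LieSubalgebra F L × LieSubalgebra F L //
      (p.1 ≠ ⊥ ∧ p.1 ≠ ⊤) ∧ (p.2 ≠ ⊥ ∧ p.2 ≠ ⊤) ∧ p.1 ≠ p.2 ∧ p.1 ⊔ p.2 = ⊤} =
      ∑ A ∈ ({A | A ≠ ⊥ ∧ A ≠ ⊤} : Finset (LieSubalgebra F L)), comaximalDegree F L A := by
    rw [Nat.card_eq_fintype_card, Fintype.card_subtype, ← univ_product_univ,
      card_filter, sum_product, sum_filter]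
    refine sum_congr rfl fun A _ ↦ ?_
    split_ifs with hA
    · rw [← card_filter, comaximalDegree, Nat.card_eq_fintype_card, Fintype.card_subtype]
      simp only [ne_eq] at hA
      simp [hA, eq_comm]
    · simp [hA]
  have hl := natCard_lines (F := F) (L := L) hL
  rw [Nat.card_eq_fintype_card, Fintype.card_subtype] at hl
  have h1 : ∑ A ∈ ({A | finrank F A = 1} : Finset (LieSubalgebra F L)), (comaximalDegree F L A +
      #{W : LieSubalgebra F L | finrank F W = 2 ∧ A ≤ W} * (Nat.card F + 1)) =
      (Nat.card F ^ 2 + Nat.card F + 1) * (Nat.card F + 1) ^ 2 := by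
    rw [sum_const_nat (m := (Nat.card F + 1) ^ 2), hl]
    intro A hA
    exact comaximalDegree_add_of_finrank_eq_one hL hb (by simpa using hA)
  rw [sum_add_distrib, ← sum_mul, sum_card_filter_line hb] at h1
  have h2 : ∑ A ∈ ({A | finrank F A = 2} : Finset (LieSubalgebra F L)), comaximalDegree F L A =
      (Nat.card F + 1) * (Nat.card F ^ 2 + Nat.card F) := by
    rw [sum_const_nat (m := Nat.card F ^ 2 + Nat.card F), hb]
    intro A hA
    exact comaximalDegree_of_finrank_eq_two hL hb (by simpa using hA)
  rw [hpairs]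
  simp only [ne_bot_ne_top_iff hL]
  rw [filter_or, sum_union, h2]
  · linarith
  · rw [disjoint_filter]
    intro B _ h1 h2
    omega

end Counting

end LieSubalgebra

namespace IsSl2Triple

variable {F L : Type*} [Field F] [LieRing L] [LieAlgebra F L] {B : Basis (Fin 3) F L}

theorem lie_eq (ht : IsSl2Triple (B 2) (B 0) (B 1)) (u v : L) :
    ⁅u, v⁆ = (2 * (B.coord 2 u * B.coord 0 v - B.coord 0 u * B.coord 2 v)) • B 0 +
      (2 * (B.coord 1 u * B.coord 2 v - B.coord 2 u * B.coord 1 v)) • B 1 +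
      (B.coord 0 u * B.coord 1 v - B.coord 1 u * B.coord 0 v) • B 2 := by
  have hhx : ⁅B 2, B 0⁆ = (2 : F) • B 0 := ht.lie_h_e_smul F
  have hhy : ⁅B 2, B 1⁆ = -((2 : F) • B 1) := ht.lie_lie_smul_f F
  have hxh : ⁅B 0, B 2⁆ = -((2 : F) • B 0) := by rw [← lie_skew, hhx]
  have hyh : ⁅B 1, B 2⁆ = (2 : F) • B 1 := by rw [← lie_skew, hhy, neg_neg]
  have hyx : ⁅B 1, B 0⁆ = -B 2 := by rw [← lie_skew, ht.lie_e_f]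
  conv_lhs => rw [← B.sum_repr u, ← B.sum_repr v]
  simp only [Fin.sum_univ_three, add_lie, lie_add, smul_lie, lie_smul, lie_self, hhx, hhy, hxh,
    hyh, hyx, ht.lie_e_f, Basis.coord_apply]
  module

theorem coord_zero_lie (ht : IsSl2Triple (B 2) (B 0) (B 1)) (u v : L) :
    B.coord 0 ⁅u, v⁆ = 2 * (B.coord 2 u * B.coord 0 v - B.coord 0 u * B.coord 2 v) := by
  rw [ht.lie_eq u v]
  simp

theorem coord_one_lie (ht : IsSl2Triple (B 2) (B 0) (B 1)) (u v : L) :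
    B.coord 1 ⁅u, v⁆ = 2 * (B.coord 1 u * B.coord 2 v - B.coord 2 u * B.coord 1 v) := by
  rw [ht.lie_eq u v]
  simp

theorem coord_two_lie (ht : IsSl2Triple (B 2) (B 0) (B 1)) (u v : L) :
    B.coord 2 ⁅u, v⁆ = B.coord 0 u * B.coord 1 v - B.coord 1 u * B.coord 0 v := by
  rw [ht.lie_eq u v]
  simp

/-- The linear form cutting out the Borel subalgebra attached to a point of the projective line
`Option F`. -/
noncomputable def borelForm (B : Basis (Fin 3) F L) : Option F → (L →ₗ[F] F)
  | none => B.coord 0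
  | some t => B.coord 1 + (2 * t) • B.coord 2 - (t ^ 2) • B.coord 0

theorem borelForm_none (v : L) : borelForm B none v = B.coord 0 v := rfl

theorem borelForm_some (t : F) (v : L) :
    borelForm B (some t) v = B.coord 1 v + 2 * t * B.coord 2 v - t ^ 2 * B.coord 0 v := rfl

theorem borelForm_ne_zero (i : Option F) : borelForm B i ≠ 0 := by
  intro h
  cases i with
  | none => simpa [borelForm_none] using LinearMap.congr_fun h (B 0)
  | some t => simpa [borelForm_some] using LinearMap.congr_fun h (B 1)

/-- The Borel subalgebra attached to a point of the projective line `Option F`. -/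
noncomputable def borel (ht : IsSl2Triple (B 2) (B 0) (B 1)) (i : Option F) :
    LieSubalgebra F L :=
  { LinearMap.ker (borelForm B i) with
    lie_mem' := by
      intro u v hu hv
      change borelForm B i u = 0 at hu
      change borelForm B i v = 0 at hv
      change borelForm B i ⁅u, v⁆ = 0
      cases i with
      | none =>
        rw [borelForm_none] at *
        rw [ht.coord_zero_lie, hu, hv]
        ring
      | some t =>
        rw [borelForm_some] at *
        rw [ht.coord_zero_lie, ht.coord_one_lie, ht.coord_two_lie]
        linear_combination (2 * B.coord 2 v - 2 * t * B.coord 0 v) * hu +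
          (2 * t * B.coord 0 u - 2 * B.coord 2 u) * hv }

theorem mem_borel (ht : IsSl2Triple (B 2) (B 0) (B 1)) {i : Option F} {v : L} :
    v ∈ ht.borel i ↔ borelForm B i v = 0 := Iff.rfl

theorem finrank_borel (ht : IsSl2Triple (B 2) (B 0) (B 1)) (i : Option F) :
    finrank F (ht.borel i) = 2 := by
  have : FiniteDimensional F L := B.finiteDimensional_of_finite
  have h := Module.Dual.finrank_ker_add_one_of_ne_zero (borelForm_ne_zero (B := B) i)
  rw [finrank_eq_card_basis B, Fintype.card_fin] at h
  exact Nat.succ.inj h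

theorem borel_injective (ht : IsSl2Triple (B 2) (B 0) (B 1)) (h2 : (2 : F) ≠ 0) :
    Function.Injective ht.borel := by
  intro i j hij
  have hmem (v : L) : borelForm B i v = 0 ↔ borelForm B j v = 0 := by
    rw [← ht.mem_borel, hij, ht.mem_borel]
  cases i with
  | none =>
    cases j with
    | none => rfl
    | some t => simpa [borelForm_none, borelForm_some] using hmem (B 1)
  | some s =>
    cases j with
    | none => simpa [borelForm_none, borelForm_some] using hmem (B 1)
    | some t =>
      have h := (hmem ((-2 * s) • B 1 + B 2)).1 (by simp [borelForm_some])
      have h' : 2 * (t - s) = 0 := by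
        simp [borelForm_some] at h
        linear_combination h
      rw [mul_eq_zero, or_iff_right h2, sub_eq_zero] at h'
      rw [h']

theorem exists_borel_eq (ht : IsSl2Triple (B 2) (B 0) (B 1)) (h2 : (2 : F) ≠ 0)
    {W : LieSubalgebra F L} (hW : finrank F W = 2) : ∃ i, ht.borel i = W := by
  have : FiniteDimensional F L := B.finiteDimensional_of_finite
  have hL : finrank F L = 3 := by rw [finrank_eq_card_basis B, Fintype.card_fin]
  have hlt : W.toSubmodule < ⊤ := by
    rw [lt_top_iff_ne_top]
    intro h
    have h3 : finrank F W.toSubmodule = 3 := by rw [h, finrank_top, hL]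
    exact absurd (hW.symm.trans h3) (by decide)
  obtain ⟨f, hf0, hWf⟩ := Submodule.exists_le_ker_of_lt_top _ hlt
  have hker := Module.Dual.finrank_ker_add_one_of_ne_zero hf0
  have hWker : W.toSubmodule = LinearMap.ker f := by
    refine Submodule.eq_of_le_of_finrank_le hWf ?_
    change _ ≤ finrank F W
    omega
  have hmem (v : L) : v ∈ W ↔ f v = 0 := by
    rw [← LieSubalgebra.mem_toSubmodule, hWker, LinearMap.mem_ker]
  have hfv (v : L) :
      f v = B.coord 0 v * f (B 0) + B.coord 1 v * f (B 1) + B.coord 2 v * f (B 2) := by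
    conv_lhs => rw [← B.sum_repr v]
    simp only [Fin.sum_univ_three, map_add, map_smul, smul_eq_mul, Basis.coord_apply]
  have hlie (u v : L) (hu : f u = 0) (hv : f v = 0) : f ⁅u, v⁆ = 0 :=
    (hmem _).1 (W.lie_mem ((hmem u).2 hu) ((hmem v).2 hv))
  obtain ⟨a, ha⟩ : ∃ a, f (B 0) = a := ⟨_, rfl⟩
  obtain ⟨b, hb⟩ : ∃ b, f (B 1) = b := ⟨_, rfl⟩
  obtain ⟨c, hc⟩ : ∃ c, f (B 2) = c := ⟨_, rfl⟩
  rw [ha, hb, hc] at hfv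
  have h1 := hlie (b • B 0 - a • B 1) (c • B 0 - a • B 2) (by simp [ha, hb]; ring)
    (by simp [ha, hc]; ring)
  have h2' := hlie (b • B 0 - a • B 1) (c • B 1 - b • B 2) (by simp [ha, hb]; ring)
    (by simp [hb, hc]; ring)
  have h3 := hlie (c • B 0 - a • B 2) (c • B 1 - b • B 2) (by simp [ha, hc]; ring)
    (by simp [hb, hc]; ring)
  rw [hfv, ht.coord_zero_lie, ht.coord_one_lie, ht.coord_two_lie] at h1 h2' h3
  simp at h1 h2' h3
  have hdisc : c ^ 2 + 4 * (a * b) = 0 := by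
    by_contra hne
    have ha0 : a = 0 := by
      refine (mul_eq_zero.1 ?_).resolve_right hne
      linear_combination h1
    have hb0 : b = 0 := by
      refine (mul_eq_zero.1 ?_).resolve_right hne
      linear_combination h2'
    have hc0 : c = 0 := by
      refine (mul_eq_zero.1 ?_).resolve_right hne
      linear_combination h3
    apply hf0
    ext v
    rw [hfv, ha0, hb0, hc0]
    simp
  by_cases hb0 : b = 0
  · have hc0 : c = 0 := by simpa [hb0] using hdisc
    have ha0 : a ≠ 0 := by
      rintro rfl
      apply hf0
      ext v
      rw [hfv, hb0, hc0]
      simp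
    refine ⟨none, ?_⟩
    ext v
    rw [mem_borel, hmem, hfv, borelForm_none, hb0, hc0]
    simp [ha0]
  · refine ⟨some (c / (2 * b)), ?_⟩
    ext v
    rw [mem_borel, hmem, hfv, borelForm_some]
    have ha : a = -(b * (c / (2 * b)) ^ 2) := by
      have h4 : (4 : F) ≠ 0 := by
        have h22 : (4 : F) = 2 * 2 := by norm_num
        rw [h22]
        exact mul_ne_zero h2 h2
      field_simp
      linear_combination hdisc
    have hc : c = b * (2 * (c / (2 * b))) := by field_simp
    have hkey : B.coord 0 v * a + B.coord 1 v * b + B.coord 2 v * c =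
        b * (B.coord 1 v + 2 * (c / (2 * b)) * B.coord 2 v -
          (c / (2 * b)) ^ 2 * B.coord 0 v) := by
      linear_combination B.coord 0 v * ha + B.coord 2 v * hc
    rw [hkey, mul_eq_zero, or_iff_right hb0]

theorem natCard_finrank_eq_two (ht : IsSl2Triple (B 2) (B 0) (B 1)) (h2 : (2 : F) ≠ 0)
    [Finite F] :
    Nat.card {W : LieSubalgebra F L // finrank F W = 2} = Nat.card F + 1 := by
  rw [← Finite.card_option]
  symm
  refine Nat.card_eq_of_bijective (fun i ↦ ⟨ht.borel i, ht.finrank_borel i⟩) ⟨?_, ?_⟩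
  · intro i j hij
    exact ht.borel_injective h2 (congrArg Subtype.val hij)
  · rintro ⟨W, hW⟩
    obtain ⟨i, rfl⟩ := ht.exists_borel_eq h2 hW
    exact ⟨i, rfl⟩

theorem natCard_borel_ge (ht : IsSl2Triple (B 2) (B 0) (B 1)) (h2 : (2 : F) ≠ 0)
    {A : LieSubalgebra F L} (hA : finrank F A = 1) {v : L} (hv : v ∈ A) (hv0 : v ≠ 0) :
    Nat.card {W : LieSubalgebra F L // finrank F W = 2 ∧ A ≤ W} =
      Nat.card {i : Option F // borelForm B i v = 0} := by
  have hle (W : LieSubalgebra F L) : A ≤ W ↔ v ∈ W := by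
    refine ⟨fun h ↦ h hv, fun hvW u hu ↦ ?_⟩
    obtain ⟨r, hr⟩ := (finrank_eq_one_iff_of_nonzero' (⟨v, hv⟩ : A)
      (by simpa [Subtype.ext_iff] using hv0)).1 hA ⟨u, hu⟩
    have hu' : u = r • v := congrArg Subtype.val hr.symm
    rw [hu']
    exact W.smul_mem r hvW
  symm
  refine Nat.card_eq_of_bijective
    (fun i ↦ ⟨ht.borel i.1, ht.finrank_borel i.1, (hle _).2 i.2⟩) ⟨?_, ?_⟩
  · intro i j hij
    exact Subtype.ext (ht.borel_injective h2 (congrArg Subtype.val hij))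
  · rintro ⟨W, hW, hAW⟩
    obtain ⟨i, rfl⟩ := ht.exists_borel_eq h2 hW
    exact ⟨⟨i, (hle _).1 hAW⟩, rfl⟩

section Roots

variable {v : L}

theorem borelForm_roots_of_not_isSquare
    (h : ¬ IsSquare (B.coord 2 v ^ 2 + B.coord 0 v * B.coord 1 v)) :
    {i : Option F | borelForm B i v = 0} = ∅ := by
  ext i
  simp only [Set.mem_ofPred_eq, Set.mem_empty_iff_false, iff_false]
  intro hi
  apply h
  cases i with
  | none =>
    rw [borelForm_none] at hi
    exact ⟨B.coord 2 v, by rw [hi]; ring⟩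
  | some t =>
    rw [borelForm_some] at hi
    exact ⟨B.coord 0 v * t - B.coord 2 v, by linear_combination B.coord 0 v * hi⟩

theorem ncard_borelForm_roots_of_eq_zero (hv : v ≠ 0)
    (h : B.coord 2 v ^ 2 + B.coord 0 v * B.coord 1 v = 0) :
    {i : Option F | borelForm B i v = 0}.ncard = 1 := by
  rw [Set.ncard_eq_one]
  by_cases ha : B.coord 0 v = 0
  · have hc : B.coord 2 v = 0 := by simpa [ha] using h
    have hb : B.coord 1 v ≠ 0 := by
      intro hb
      apply hv
      apply B.ext_elem
      intro i
      simp only [Basis.coord_apply] at ha hb hc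
      fin_cases i <;> simp [ha, hb, hc]
    refine ⟨none, ?_⟩
    ext i
    cases i with
    | none => simp only [Set.mem_ofPred_eq, borelForm_none, Set.mem_singleton_iff, ha]
    | some t =>
      simp only [Set.mem_ofPred_eq, borelForm_some, Set.mem_singleton_iff, reduceCtorEq, iff_false,
        ha, hc]
      simpa using hb
  · refine ⟨some (B.coord 2 v / B.coord 0 v), ?_⟩
    ext i
    cases i with
    | none =>
      simp only [Set.mem_ofPred_eq, borelForm_none, Set.mem_singleton_iff, ha, reduceCtorEq]
    | some t =>
      simp only [Set.mem_ofPred_eq, borelForm_some, Set.mem_singleton_iff, Option.some_inj]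
      rw [eq_div_iff ha, ← sub_eq_zero (a := t * _), ← sq_eq_zero_iff (a := t * _ - _),
        ← mul_eq_zero_iff_left ha]
      constructor <;> intro ht
      · linear_combination h - ht
      · linear_combination h - ht

theorem ncard_borelForm_roots_of_isSquare (h2 : (2 : F) ≠ 0)
    (h0 : B.coord 2 v ^ 2 + B.coord 0 v * B.coord 1 v ≠ 0)
    (h : IsSquare (B.coord 2 v ^ 2 + B.coord 0 v * B.coord 1 v)) :
    {i : Option F | borelForm B i v = 0}.ncard = 2 := by
  rw [Set.ncard_eq_two]
  obtain ⟨s, hs⟩ := h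
  by_cases ha : B.coord 0 v = 0
  · have hc : B.coord 2 v ≠ 0 := by
      intro hc
      simp [ha, hc] at h0
    refine ⟨none, some (-B.coord 1 v / (2 * B.coord 2 v)), by simp, ?_⟩
    ext i
    cases i with
    | none => simp only [Set.mem_ofPred_eq, borelForm_none, Set.mem_insert_iff, ha, true_or]
    | some t =>
      simp only [Set.mem_ofPred_eq, borelForm_some, Set.mem_insert_iff, Set.mem_singleton_iff,
        reduceCtorEq, false_or, Option.some_inj, ha]
      rw [eq_div_iff (mul_ne_zero h2 hc)]
      constructor <;> intro ht
      · linear_combination ht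
      · linear_combination ht
  · have hs0 : s ≠ 0 := by
      rintro rfl
      exact h0 (by simpa using hs)
    refine ⟨some ((B.coord 2 v + s) / B.coord 0 v), some ((B.coord 2 v - s) / B.coord 0 v),
      ?_, ?_⟩
    · rw [ne_eq, Option.some_inj, div_left_inj' ha]
      intro hcs
      have : 2 * s = 0 := by linear_combination hcs
      exact mul_ne_zero h2 hs0 this
    · ext i
      cases i with
      | none =>
        simp only [Set.mem_ofPred_eq, borelForm_none, Set.mem_insert_iff, Set.mem_singleton_iff,
          ha, reduceCtorEq, or_self]
      | some t =>
        simp only [Set.mem_ofPred_eq, borelForm_some, Set.mem_insert_iff, Set.mem_singleton_iff,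
          Option.some_inj]
        rw [eq_div_iff ha, eq_div_iff ha, ← sub_eq_zero (a := t * _),
          ← sub_eq_zero (a := t * _) (b := _ - s), ← mul_eq_zero, ← mul_eq_zero_iff_left ha]
        constructor <;> intro ht
        · linear_combination hs - ht
        · linear_combination hs - ht

end Roots

end IsSl2Triple

/-- In the comaximal graph of `sl₂(F_q)` (`q` odd, standard basis `x, y, h`):
Borel subalgebras and nilpotent lines have degree `q² + q`, split semisimple
lines have degree `q² − 1`, nonsplit semisimple lines have degree `(q+1)²`;
the graph has `(q+1)² + 1` vertices and `q(q+1)³/2` edges (i.e. `q(q+1)³`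
ordered adjacent pairs). A line type is read off from the discriminant
`Δ(a•x + b•y + c•h) = c² + ab` of a spanning vector. -/
theorem sl2_comaximal_degrees
    (F : Type*) [Field F] [Fintype F] (q : ℕ) (hq : Fintype.card F = q)
    (hodd : Odd q)
    (L : Type*) [LieRing L] [LieAlgebra F L]
    (x y h : L) (hspan : Submodule.span F {x, y, h} = ⊤)
    (hdim : finrank F L = 3)
    (hhx : ⁅h, x⁆ = (2 : F) • x) (hhy : ⁅h, y⁆ = -(2 : F) • y)
    (hxy : ⁅x, y⁆ = h) :
    (∀ B : LieSubalgebra F L, finrank F B = 2 →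
        comaximalDegree F L B = q ^ 2 + q) ∧
    (∀ A : LieSubalgebra F L, finrank F A = 1 →
        (∃ a b c : F, ¬(a = 0 ∧ b = 0 ∧ c = 0) ∧ a • x + b • y + c • h ∈ A ∧
            c ^ 2 + a * b = 0) →
        comaximalDegree F L A = q ^ 2 + q) ∧
    (∀ A : LieSubalgebra F L, finrank F A = 1 →
        (∃ a b c : F, ¬(a = 0 ∧ b = 0 ∧ c = 0) ∧ a • x + b • y + c • h ∈ A ∧
            c ^ 2 + a * b ≠ 0 ∧ IsSquare (c ^ 2 + a * b)) →
        comaximalDegree F L A = q ^ 2 - 1) ∧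
    (∀ A : LieSubalgebra F L, finrank F A = 1 →
        (∃ a b c : F, ¬(a = 0 ∧ b = 0 ∧ c = 0) ∧ a • x + b • y + c • h ∈ A ∧
            ¬ IsSquare (c ^ 2 + a * b)) →
        comaximalDegree F L A = (q + 1) ^ 2) ∧
    Nat.card {A : LieSubalgebra F L // A ≠ ⊥ ∧ A ≠ ⊤} = (q + 1) ^ 2 + 1 ∧
    Nat.card {p : LieSubalgebra F L × LieSubalgebra F L //
        (p.1 ≠ ⊥ ∧ p.1 ≠ ⊤) ∧ (p.2 ≠ ⊥ ∧ p.2 ≠ ⊤) ∧ p.1 ≠ p.2 ∧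
          p.1 ⊔ p.2 = ⊤} = q * (q + 1) ^ 3 := by
  classical
  obtain ⟨B, hB⟩ : ∃ B : Basis (Fin 3) F L, ⇑B = ![x, y, h] :=
    ⟨basisOfTopLeSpanOfCardEqFinrank ![x, y, h]
      (by rw [Matrix.range_cons, Matrix.range_cons_cons_empty, Set.singleton_union, hspan])
      (by simp [hdim]),
      coe_basisOfTopLeSpanOfCardEqFinrank _ _ _⟩
  have hBx : B 0 = x := by simp [hB]
  have hBy : B 1 = y := by simp [hB]
  have hBh : B 2 = h := by simp [hB]
  have ht : IsSl2Triple (B 2) (B 0) (B 1) :=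
    { h_ne_zero := B.ne_zero 2
      lie_e_f := by rw [hBx, hBy, hBh, hxy]
      lie_h_e_nsmul := by rw [hBx, hBh, hhx, two_smul, two_nsmul]
      lie_h_f_nsmul := by rw [hBy, hBh, hhy, neg_smul, two_smul, two_nsmul] }
  have h2 : (2 : F) ≠ 0 := by
    refine Ring.two_ne_zero fun hchar ↦ ?_
    have := FiniteField.even_card_iff_char_two.1 hchar
    rw [hq] at this
    rw [Nat.odd_iff] at hodd
    omega
  have hfin : FiniteDimensional F L := B.finiteDimensional_of_finite
  have hfinL : Finite L := Module.finite_of_finite F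
  have : Finite (LieSubalgebra F L) :=
    Finite.of_injective (fun A ↦ (A : Set L)) SetLike.coe_injective
  have : Fintype (LieSubalgebra F L) := Fintype.ofFinite _
  have hb := ht.natCard_finrank_eq_two h2
  rw [Nat.card_eq_fintype_card, Fintype.card_subtype] at hb
  have hcard : Nat.card F = q := by rw [Nat.card_eq_fintype_card, hq]
  have hline (A : LieSubalgebra F L) (hA : finrank F A = 1) (a b c : F)
      (h0 : ¬(a = 0 ∧ b = 0 ∧ c = 0)) (hmem : a • x + b • y + c • h ∈ A) :
      ∃ v : L, v ≠ 0 ∧ B.coord 0 v = a ∧ B.coord 1 v = b ∧ B.coord 2 v = c ∧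
        comaximalDegree F L A + {i | IsSl2Triple.borelForm B i v = 0}.ncard * (q + 1) =
          (q + 1) ^ 2 := by
    have h0' : B.coord 0 (a • x + b • y + c • h) = a := by simp [← hBx, ← hBy, ← hBh]
    have h1' : B.coord 1 (a • x + b • y + c • h) = b := by simp [← hBx, ← hBy, ← hBh]
    have h2' : B.coord 2 (a • x + b • y + c • h) = c := by simp [← hBx, ← hBy, ← hBh]
    have hv : a • x + b • y + c • h ≠ 0 := by
      intro hv
      rw [hv, map_zero] at h0' h1' h2'
      exact h0 ⟨h0'.symm, h1'.symm, h2'.symm⟩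
    refine ⟨_, hv, h0', h1', h2', ?_⟩
    have hdeg := LieSubalgebra.comaximalDegree_add_of_finrank_eq_one hdim hb hA
    have hk := ht.natCard_borel_ge h2 hA hmem hv
    rw [Nat.card_eq_fintype_card, Fintype.card_subtype] at hk
    rw [hk, hcard] at hdeg
    exact hdeg
  refine ⟨?_, ?_, ?_, ?_, ?_, ?_⟩
  · intro A hA
    rw [LieSubalgebra.comaximalDegree_of_finrank_eq_two hdim hb hA, hcard]
  · rintro A hA ⟨a, b, c, h0, hmem, hd⟩
    obtain ⟨v, hv, rfl, rfl, rfl, hdeg⟩ := hline A hA a b c h0 hmem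
    rw [IsSl2Triple.ncard_borelForm_roots_of_eq_zero hv hd] at hdeg
    linarith
  · rintro A hA ⟨a, b, c, h0, hmem, hd, hsq⟩
    obtain ⟨v, hv, rfl, rfl, rfl, hdeg⟩ := hline A hA a b c h0 hmem
    rw [IsSl2Triple.ncard_borelForm_roots_of_isSquare h2 hd hsq] at hdeg
    apply Nat.eq_sub_of_add_eq
    linarith
  · rintro A hA ⟨a, b, c, h0, hmem, hsq⟩
    obtain ⟨v, hv, rfl, rfl, rfl, hdeg⟩ := hline A hA a b c h0 hmem
    rw [IsSl2Triple.borelForm_roots_of_not_isSquare hsq, Set.ncard_empty] at hdeg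
    linarith
  · rw [Nat.card_eq_fintype_card, Fintype.card_subtype, LieSubalgebra.card_filter_vertex hdim hb,
      hcard]
  · rw [LieSubalgebra.natCard_comaximal_pairs hdim hb, hcard]
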